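/- arXiv:1508.00777 — 2 statements merged into one kernel-verified Lean document; each statement's English description precedes it below -/
import Mathlib

section
/- Let V be a finite set with |V| = n ≥ 3, let p be a probability distribution on V, and let F be a set of edges (2-element subsets of V). Then there is a set of edges F₀ such that δF₀ = δF and 2n·p(F₀) ≤ 3(n−2)·p(δF); in particular p(F₀) ≤ (3/2)·p(δF). -/
/-- The set of edges (2-element subsets) of a finite vertex set `V`. -/
def edgesOn (V : Type*) [Fintype V] [DecidableEq V] : Finset (Finset V) :=
  Finset.univ.powersetCard 2

/-- The set of triangles (3-element subsets) of a finite vertex set `V`. -/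
def trianglesOn (V : Type*) [Fintype V] [DecidableEq V] : Finset (Finset V) :=
  Finset.univ.powersetCard 3

/-- Coboundary of a set of edges: the triangles containing an odd number of
edges of `F`. -/
def cobE {V : Type*} [Fintype V] [DecidableEq V] (F : Finset (Finset V)) :
    Finset (Finset V) :=
  (trianglesOn V).filter (fun t => Odd ((F.filter (· ⊆ t)).card))

/-!
The link at a vertex `v` of the coboundary `δF` (`Finset.memberSubfamily v`) has the same coboundary
as `F`. On a simplex containing `v` this is immediate, and on a simplex `t` avoiding `v` it is
`δδF = 0` evaluated at `t ∪ {v}`. A set `t` with `m + 1` elements contributes its face `t \ {v}` to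
the link at each `v ∈ t`, so the weights of the links add up to `m` times the weight of `δF`, and
some link weighs at most the average. For edges (`m = 2`) this gives
`n · p(F₀) ≤ (n - 2) · p(δF)`, with constant `1` where the theorem allows `3 / 2`.
-/

open Finset

section Link

variable {V : Type*} [DecidableEq V] {T : Finset (Finset V)}

theorem card_filter_erase_mem_memberSubfamily_of_mem {v : V} {t : Finset V} (hv : v ∈ t) :
    #{a ∈ t | t.erase a ∈ T.memberSubfamily v} = if t ∈ T then 1 else 0 := by
  have erase_mem (a : V) (_ : a ∈ t) : t.erase a ∈ T.memberSubfamily v ↔ v = a ∧ t ∈ T := by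
    have avoids : v ∉ t.erase a ↔ v = a := by simp [hv]
    rw [mem_memberSubfamily, avoids, and_comm]
    exact and_congr_right fun hva ↦ by rw [← hva, insert_erase hv]
  rw [filter_congr erase_mem, filter_and, filter_eq, if_pos hv, filter_const]
  split_ifs with htT
  · rw [singleton_inter_of_mem hv, card_singleton]
  · rw [inter_empty, card_empty]

theorem card_filter_erase_insert_mem_of_notMem {v : V} {t : Finset V} (hv : v ∉ t) :
    #{a ∈ insert v t | (insert v t).erase a ∈ T} =
      #{a ∈ t | t.erase a ∈ T.memberSubfamily v} + if t ∈ T then 1 else 0 := by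
  have erase_mem (a : V) (ha : a ∈ t) :
      (insert v t).erase a ∈ T ↔ t.erase a ∈ T.memberSubfamily v := by
    rw [mem_memberSubfamily, erase_insert_of_ne (ne_of_mem_of_not_mem ha hv).symm,
      and_iff_left fun h ↦ hv (mem_of_mem_erase h)]
  rw [filter_insert, erase_insert hv, filter_congr erase_mem]
  split_ifs
  · exact card_insert_of_notMem fun h ↦ hv (mem_filter.1 h).1
  · rfl

theorem sum_sum_erase {R : Type*} [Ring R] (t : Finset V) (p : V → R) :
    ∑ v ∈ t, ∑ u ∈ t.erase v, p u = (#t - 1) * ∑ u ∈ t, p u := by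
  have sum_erase (v : V) (hv : v ∈ t) : ∑ u ∈ t.erase v, p u = ∑ u ∈ t, p u - p v :=
    sum_erase_eq_sub hv
  rw [sum_congr rfl sum_erase, sum_sub_distrib, sum_const, nsmul_eq_mul, sub_one_mul]

variable [Fintype V]

theorem memberSubfamily_subset_powersetCard {m : ℕ} (hT : T ⊆ univ.powersetCard (m + 1)) (v : V) :
    T.memberSubfamily v ⊆ univ.powersetCard m := by
  intro e he
  obtain ⟨heT, hve⟩ := mem_memberSubfamily.1 he
  have insert_card := (mem_powersetCard.1 (hT heT)).2
  rw [card_insert_of_notMem hve] at insert_card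
  exact mem_powersetCard.2 ⟨subset_univ e, Nat.succ_injective insert_card⟩

theorem sum_sum_memberSubfamily {M : Type*} [AddCommMonoid M] (T : Finset (Finset V))
    (f : Finset V → M) :
    ∑ v, ∑ e ∈ T.memberSubfamily v, f e = ∑ t ∈ T, ∑ v ∈ t, f (t.erase v) := by
  have sum_link (v : V) :
      ∑ e ∈ T.memberSubfamily v, f e = ∑ t ∈ T with v ∈ t, f (t.erase v) := by
    rw [memberSubfamily, sum_image]
    exact (erase_injOn' v).mono fun t ht ↦ (mem_filter.1 ht).2
  simp_rw [sum_link]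
  exact sum_comm' fun v t ↦ by simp [and_comm]

theorem exists_card_mul_sum_memberSubfamily_le {R : Type*} [Ring R] [LinearOrder R]
    [IsStrictOrderedRing R] [Nonempty V] {m : ℕ} (hT : T ⊆ univ.powersetCard (m + 1)) (p : V → R) :
    ∃ v, Fintype.card V * ∑ e ∈ T.memberSubfamily v, ∑ u ∈ e, p u ≤ m * ∑ t ∈ T, ∑ u ∈ t, p u := by
  have sum_links :
      ∑ v, ∑ e ∈ T.memberSubfamily v, ∑ u ∈ e, p u = m * ∑ t ∈ T, ∑ u ∈ t, p u := by
    rw [sum_sum_memberSubfamily, mul_sum]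
    refine sum_congr rfl fun t ht ↦ ?_
    rw [sum_sum_erase, (mem_powersetCard.1 (hT ht)).2, Nat.cast_succ, add_sub_cancel_right]
  obtain ⟨v, -, hv⟩ := exists_min_image univ
    (fun v ↦ ∑ e ∈ T.memberSubfamily v, ∑ u ∈ e, p u) univ_nonempty
  refine ⟨v, ?_⟩
  rw [← sum_links, ← nsmul_eq_mul]
  exact card_nsmul_le_sum univ _ _ hv

end Link

section Coboundary

variable {V : Type*} [Fintype V] [DecidableEq V] {m : ℕ} {F : Finset (Finset V)}

/-- The mod 2 coboundary of a set `F` of `m`-element subsets of `V`: the `(m + 1)`-element subsets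
containing an odd number of members of `F`. Simplices are indexed by their cardinality rather than
their dimension, so `cobE` is `coboundary 2`. -/
def coboundary (m : ℕ) (F : Finset (Finset V)) : Finset (Finset V) :=
  {t ∈ univ.powersetCard (m + 1) | Odd #{e ∈ F | e ⊆ t}}

theorem coboundary_subset (m : ℕ) (F : Finset (Finset V)) :
    coboundary m F ⊆ univ.powersetCard (m + 1) :=
  filter_subset _ _

theorem mem_coboundary {t : Finset V} :
    t ∈ coboundary m F ↔ #t = m + 1 ∧ Odd #{e ∈ F | e ⊆ t} := by
  simp [coboundary]

theorem card_filter_subset_eq_card_filter_erase_mem (hF : F ⊆ univ.powersetCard m) {t : Finset V}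
    (ht : #t = m + 1) : #{e ∈ F | e ⊆ t} = #{a ∈ t | t.erase a ∈ F} := by
  have image_erase : {e ∈ F | e ⊆ t} = {a ∈ t | t.erase a ∈ F}.image t.erase := by
    ext e
    constructor
    · intro he
      obtain ⟨heF, het⟩ := mem_filter.1 he
      have he_card : #e = m := (mem_powersetCard.1 (hF heF)).2
      have hte : #(t \ e) = 1 := by
        rw [card_sdiff_of_subset het, ht, he_card, Nat.add_sub_cancel_left]
      obtain ⟨a, ha, rfl⟩ := (covBy_iff_card_sdiff_eq_one.2 ⟨het, hte⟩).exists_finset_erase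
      exact mem_image_of_mem _ (mem_filter.2 ⟨ha, heF⟩)
    · intro he
      obtain ⟨a, ha, rfl⟩ := mem_image.1 he
      exact mem_filter.2 ⟨(mem_filter.1 ha).2, erase_subset a t⟩
  rw [image_erase, card_image_of_injOn ((erase_injOn t).mono (filter_subset _ _))]

theorem mem_coboundary_iff_odd_card_filter_erase_mem (hF : F ⊆ univ.powersetCard m) {t : Finset V} :
    t ∈ coboundary m F ↔ #t = m + 1 ∧ Odd #{a ∈ t | t.erase a ∈ F} := by
  rw [mem_coboundary]
  exact and_congr_right fun ht ↦ by rw [card_filter_subset_eq_card_filter_erase_mem hF ht]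

theorem even_card_filter_erase_mem_coboundary (hF : F ⊆ univ.powersetCard m) {t : Finset V}
    (ht : #t = m + 2) : Even #{a ∈ t | t.erase a ∈ coboundary m F} := by
  have erase_mem (a : V) (ha : a ∈ t) :
      t.erase a ∈ coboundary m F ↔ Odd #{e ∈ F | e ⊆ t.erase a} := by
    rw [mem_coboundary, card_erase_of_mem ha, ht, and_iff_right (Nat.add_sub_cancel (m + 1) 1)]
  have double_count :
      ∑ a ∈ t, #{e ∈ F | e ⊆ t.erase a} = ∑ e ∈ F, #{a ∈ t | e ⊆ t.erase a} :=
    sum_card_bipartiteAbove_eq_sum_card_bipartiteBelow _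
  rw [filter_congr erase_mem, ← even_sum_iff_even_card_odd, double_count]
  refine even_sum _ fun e he ↦ ?_
  by_cases het : e ⊆ t
  · have faces : {a ∈ t | e ⊆ t.erase a} = t \ e := by
      ext a
      simp [subset_erase, het]
    rw [faces, card_sdiff_of_subset het, ht, (mem_powersetCard.1 (hF he)).2,
      Nat.add_sub_cancel_left]
    exact even_two
  · simp [subset_erase, het]

theorem coboundary_coboundary (hF : F ⊆ univ.powersetCard m) :
    coboundary (m + 1) (coboundary m F) = ∅ := by
  refine eq_empty_of_forall_notMem fun t ht ↦ ?_
  obtain ⟨ht_card, ht_odd⟩ :=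
    (mem_coboundary_iff_odd_card_filter_erase_mem (coboundary_subset m F)).1 ht
  exact Nat.not_odd_iff_even.2 (even_card_filter_erase_mem_coboundary hF ht_card) ht_odd

theorem coboundary_memberSubfamily {T : Finset (Finset V)} (hT : T ⊆ univ.powersetCard (m + 1))
    (hδT : coboundary (m + 1) T = ∅) (v : V) : coboundary m (T.memberSubfamily v) = T := by
  ext t
  rw [mem_coboundary_iff_odd_card_filter_erase_mem (memberSubfamily_subset_powersetCard hT v)]
  suffices h : #t = m + 1 → (Odd #{a ∈ t | t.erase a ∈ T.memberSubfamily v} ↔ t ∈ T) from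
    ⟨fun ht ↦ (h ht.1).1 ht.2, fun ht ↦
      have ht_card := (mem_powersetCard.1 (hT ht)).2
      ⟨ht_card, (h ht_card).2 ht⟩⟩
  intro ht
  by_cases hv : v ∈ t
  · rw [card_filter_erase_mem_memberSubfamily_of_mem hv]
    by_cases t ∈ T <;> simp [*]
  · have cone_card : #(insert v t) = m + 2 := by rw [card_insert_of_notMem hv, ht]
    have cone_even : Even #{a ∈ insert v t | (insert v t).erase a ∈ T} := by
      have not_mem : insert v t ∉ coboundary (m + 1) T := by simp [hδT]
      rw [mem_coboundary_iff_odd_card_filter_erase_mem hT] at not_mem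
      exact Nat.not_odd_iff_even.1 fun h ↦ not_mem ⟨cone_card, h⟩
    rw [card_filter_erase_insert_mem_of_notMem hv] at cone_even
    by_cases t ∈ T <;> simp_all [Nat.even_add_one]

end Coboundary

section Filling

variable {V K : Type*} [Fintype V] [DecidableEq V] [Field K] [LinearOrder K] [IsStrictOrderedRing K]

theorem mul_div_choose_le_mul_div_choose_succ {n k : ℕ} (hk : k < n) {a S T : K}
    (h : a * S ≤ (k + 1 : ℕ) * T) :
    a * (S / n.choose k) ≤ (n - k) * (T / n.choose (k + 1)) := by
  have choose_pos : (0 : K) < n.choose k := mod_cast Nat.choose_pos hk.le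
  have choose_succ_pos : (0 : K) < n.choose (k + 1) := mod_cast Nat.choose_pos hk
  have choose_succ : (n.choose (k + 1) : K) * (k + 1) = n.choose k * (n - k) := by
    rw [← Nat.cast_sub hk.le]
    exact_mod_cast n.choose_succ_right_eq k
  calc a * (S / n.choose k) = a * S / n.choose k := by rw [mul_div_assoc]
    _ ≤ (k + 1 : ℕ) * T / n.choose k := by gcongr
    _ = (n - k) * (T / n.choose (k + 1)) := by
      rw [div_eq_iff choose_pos.ne']
      field_simp
      push_cast
      linear_combination T * choose_succ

theorem stmt_6_general {k : ℕ} (hk : k + 2 ≤ Fintype.card V) (p : V → K) {F : Finset (Finset V)}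
    (hF : F ⊆ univ.powersetCard (k + 1)) :
    ∃ F₀ ⊆ univ.powersetCard (k + 1), coboundary (k + 1) F₀ = coboundary (k + 1) F ∧
      Fintype.card V * ∑ e ∈ F₀, (∑ v ∈ e, p v) / ((Fintype.card V - 1).choose k : K) ≤
        (Fintype.card V - (k + 1)) * ∑ t ∈ coboundary (k + 1) F,
          (∑ v ∈ t, p v) / ((Fintype.card V - 1).choose (k + 1) : K) := by
  have : Nonempty V := Fintype.card_pos_iff.1 (by lia)
  have hδF := coboundary_subset (k + 1) F
  obtain ⟨v, hv⟩ := exists_card_mul_sum_memberSubfamily_le hδF p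
  refine ⟨(coboundary (k + 1) F).memberSubfamily v, memberSubfamily_subset_powersetCard hδF v,
    coboundary_memberSubfamily hδF (coboundary_coboundary hF) v, ?_⟩
  simp_rw [← sum_div]
  have h := mul_div_choose_le_mul_div_choose_succ (n := Fintype.card V - 1) (by lia) hv
  rwa [Nat.cast_pred Fintype.card_pos, sub_sub, add_comm (1 : K)] at h

end Filling

theorem stmt_6 {V : Type*} [Fintype V] [DecidableEq V]
    (n : ℕ) (hn : Fintype.card V = n) (hn3 : 3 ≤ n)
    (p : V → ℝ) (hp0 : ∀ v, 0 ≤ p v) (hp1 : ∑ v, p v = 1)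
    (F : Finset (Finset V)) (hF : F ⊆ edgesOn V) :
    ∃ F₀ : Finset (Finset V), F₀ ⊆ edgesOn V ∧ cobE F₀ = cobE F ∧
      2 * n * ∑ e ∈ F₀, (∑ v ∈ e, p v) / (n - 1 : ℝ) ≤
        3 * (n - 2) * ∑ t ∈ cobE F, (∑ v ∈ t, p v) / ((n - 1).choose 2 : ℝ) ∧
      ∑ e ∈ F₀, (∑ v ∈ e, p v) / (n - 1 : ℝ) ≤
        (3 / 2 : ℝ) * ∑ t ∈ cobE F, (∑ v ∈ t, p v) / ((n - 1).choose 2 : ℝ) := by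
  subst hn
  obtain ⟨F₀, hF₀, hδ, hle⟩ := stmt_6_general (k := 1) hn3 p hF
  rw [Nat.choose_one_right, Nat.cast_pred (by lia), Nat.cast_one, one_add_one_eq_two] at hle
  have hn : (3 : ℝ) ≤ Fintype.card V := mod_cast hn3
  have hδF : 0 ≤ ∑ t ∈ cobE F, (∑ v ∈ t, p v) / ((Fintype.card V - 1).choose 2 : ℝ) :=
    sum_nonneg fun t _ ↦ div_nonneg (sum_nonneg fun v _ ↦ hp0 v) (Nat.cast_nonneg _)
  change _ ≤ _ * ∑ t ∈ cobE F, (∑ v ∈ t, p v) / ((Fintype.card V - 1).choose 2 : ℝ) at hle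
  exact ⟨F₀, hF₀, hδ, by nlinarith, by nlinarith⟩
end

section
/- (Affine instance of Gromov's overlap theorem) Let x₁,…,xₙ be n points in ℝ² in general position. Then there exists a point r ∈ ℝ² such that the number of 3-element subsets t ⊆ {1,…,n} with r ∈ conv{xᵢ : i ∈ t} is at least (2/9 − 3/n)·binom(n,3). -/
/-- A family of points in the plane is in general position if the points are
pairwise distinct and no three of them are collinear. -/
def InGeneralPosition {ι : Type*} (x : ι → EuclideanSpace ℝ (Fin 2)) : Prop :=
  Function.Injective x ∧
    ∀ i j k : ι, i ≠ j → i ≠ k → j ≠ k →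
      ¬ Collinear ℝ ({x i, x j, x k} : Set (EuclideanSpace ℝ (Fin 2)))

/-!
For a measure that is positive on open sets and does not charge lines, every direction has a unique
halving line. By continuity three halving lines can be made to meet in a point `r` and to cut the
plane into six sectors of mass `1 / 6`. However one point is chosen in each sector, at least 8 of
the 20 triangles they span contain `r`: the two on alternate sectors and, for each of the three
pairs of opposite sectors, two of the four triangles that contain the pair. So a random triangle
contains `r` with probability at least `48 * (1 / 6) ^ 3 = 2 / 9`. Adding a small smooth noise and
passing to the limit extends this to every probability measure, in particular to the uniform
measure on a finite family of points; the term `3 / n` pays for the triples with a repeated index.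
-/

open MeasureTheory ProbabilityTheory Filter Topology
open scoped ENNReal Finset

local notation "ℝ²" => EuclideanSpace ℝ (Fin 2)

section Plane

/-- The linear form measuring the signed distance to the line through the origin that makes the
angle `θ` with the first axis, positive on the left of that line. -/
noncomputable def leftForm (θ : ℝ) : ℝ² →L[ℝ] ℝ :=
  Real.cos θ • EuclideanSpace.proj 1 - Real.sin θ • EuclideanSpace.proj 0

theorem leftForm_apply (θ : ℝ) (x : ℝ²) :
    leftForm θ x = Real.cos θ * x 1 - Real.sin θ * x 0 := rfl

theorem leftForm_add_pi (θ : ℝ) : leftForm (θ + Real.pi) = -leftForm θ := by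
  ext x
  simp only [leftForm_apply, neg_apply, Real.cos_add_pi, Real.sin_add_pi]
  ring

theorem continuous_leftForm_apply (x : ℝ²) : Continuous fun θ => leftForm θ x := by
  simp only [leftForm_apply]
  fun_prop

theorem sin_mul_leftForm_add (θ α β : ℝ) (x : ℝ²) :
    Real.sin β * leftForm (θ + α) x =
      Real.sin (β - α) * leftForm θ x + Real.sin α * leftForm (θ + β) x := by
  simp only [leftForm_apply, Real.cos_add, Real.sin_add, Real.sin_sub]
  ring

theorem exists_leftForm_eq {β : ℝ} (hβ : Real.sin β ≠ 0) (θ s t : ℝ) :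
    ∃ x, leftForm θ x = s ∧ leftForm (θ + β) x = t := by
  have hdet : Real.sin (θ + β) * Real.cos θ - Real.cos (θ + β) * Real.sin θ = Real.sin β := by
    rw [← Real.sin_sub, add_sub_cancel_left]
  refine ⟨!₂[(s * Real.cos (θ + β) - t * Real.cos θ) / Real.sin β,
    (s * Real.sin (θ + β) - t * Real.sin θ) / Real.sin β], ?_, ?_⟩ <;>
  · simp only [leftForm_apply, Matrix.cons_val_zero, Matrix.cons_val_one, Matrix.cons_val_fin_one]
    field_simp
    rw [← hdet]
    ring

theorem leftForm_surjective (θ : ℝ) : Function.Surjective (leftForm θ) := fun s =>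
  (exists_leftForm_eq (β := Real.pi / 2) (by simp) θ s 0).imp fun _ h => h.1

theorem volume_leftForm_eq (θ c : ℝ) : volume {x | leftForm θ x = c} = 0 := by
  obtain ⟨v, hv⟩ := leftForm_surjective θ c
  have hker : volume ((leftForm θ).ker : Set ℝ²) = 0 := by
    refine Measure.addHaar_submodule volume _ fun htop => ?_
    obtain ⟨u, hu⟩ := leftForm_surjective θ 1
    have : u ∈ (leftForm θ).ker := htop ▸ Submodule.mem_top
    exact one_ne_zero (hu.symm.trans this)
  rw [← hker, ← measure_preimage_add_right volume v]
  congr 1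
  ext x
  simp [hv]

/-- The signed area of the parallelogram spanned by two vectors of the plane. -/
def signedArea (y z : ℝ²) : ℝ := y 0 * z 1 - y 1 * z 0

theorem signedArea_self (y : ℝ²) : signedArea y y = 0 := by
  simp only [signedArea]
  ring

theorem signedArea_swap (y z : ℝ²) : signedArea z y = -signedArea y z := by
  simp only [signedArea]
  ring

theorem leftForm_mul_sub_leftForm_mul (θ φ : ℝ) (y z : ℝ²) :
    leftForm θ y * leftForm φ z - leftForm φ y * leftForm θ z =
      Real.sin (φ - θ) * signedArea y z := by
  simp only [leftForm_apply, signedArea, Real.sin_sub]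
  ring

theorem signedArea_smul_add_smul_add_smul (u v w : ℝ²) :
    signedArea v w • u + signedArea w u • v + signedArea u v • w = 0 := by
  ext i
  fin_cases i <;> simp [signedArea] <;> ring

theorem mem_convexHull_triple_of_smul_sub_eq_zero {E : Type*} [AddCommGroup E] [Module ℝ E]
    {r a b c : E} {u v w : ℝ} (hu : 0 ≤ u) (hv : 0 ≤ v) (hw : 0 ≤ w) (hpos : 0 < u + v + w)
    (h : u • (a - r) + v • (b - r) + w • (c - r) = 0) : r ∈ convexHull ℝ {a, b, c} := by
  have hr : Finset.univ.centerMass ![u, v, w] ![a, b, c] = r := by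
    rw [Finset.centerMass, inv_smul_eq_iff₀ (by simpa [Fin.sum_univ_three] using hpos.ne')]
    simp only [Fin.sum_univ_three, Matrix.cons_val]
    rw [← sub_eq_zero, ← h]
    module
  rw [← hr]
  refine Finset.centerMass_mem_convexHull _ ?_ (by simpa [Fin.sum_univ_three] using hpos) ?_ <;>
  simp [Fin.forall_fin_succ, hu, hv, hw]

theorem mem_convexHull_of_signedArea {r a b c : ℝ²} (hab : 0 < signedArea (a - r) (b - r))
    (hbc : 0 < signedArea (b - r) (c - r)) (hca : 0 ≤ signedArea (c - r) (a - r)) :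
    r ∈ convexHull ℝ {a, b, c} :=
  mem_convexHull_triple_of_smul_sub_eq_zero hbc.le hca hab.le (by positivity)
    (signedArea_smul_add_smul_add_smul _ _ _)

end Plane

section Continuity

theorem exists_continuous_eq_of_strictAntiOn {X α β : Type*} [TopologicalSpace X]
    [LinearOrder α] [TopologicalSpace α] [OrderTopology α] [DenselyOrdered α]
    [LinearOrder β] [TopologicalSpace β] [OrderClosedTopology β] {F : X → α → β}
    (hF : ∀ a, Continuous fun p => F p a) {S : Set α} (hS : IsOpen S)
    (hanti : ∀ p, StrictAntiOn (F p) S) {k : β} (hex : ∀ p, ∃ a ∈ S, F p a = k) :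
    ∃ f : X → α, Continuous f ∧ (∀ p, f p ∈ S) ∧ ∀ p, F p (f p) = k := by
  choose f hfS hfk using hex
  refine ⟨f, continuous_iff_continuousAt.2 fun p =>
    tendsto_order.2 ⟨fun a ha => ?_, fun a ha => ?_⟩, hfS, hfk⟩
  · obtain ⟨l, hl, hlS⟩ := exists_Ioc_subset_of_mem_nhds (hS.mem_nhds (hfS p)) ⟨a, ha⟩
    obtain ⟨b, hb, hbf⟩ := exists_between (max_lt ha hl)
    have hbS : b ∈ S := hlS ⟨(le_max_right a l).trans_lt hb, hbf.le⟩
    have hk : k < F p b := hfk p ▸ hanti p hbS (hfS p) hbf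
    filter_upwards [continuousAt_const.eventually_lt (hF b).continuousAt hk] with q hq
    rw [← hfk q, (hanti q).lt_iff_gt (hfS q) hbS] at hq
    exact ((le_max_left a l).trans_lt hb).trans hq
  · obtain ⟨u, hu, huS⟩ := exists_Ico_subset_of_mem_nhds (hS.mem_nhds (hfS p)) ⟨a, ha⟩
    obtain ⟨b, hfb, hb⟩ := exists_between (lt_min ha hu)
    have hbS : b ∈ S := huS ⟨hfb.le, hb.trans_le (min_le_right a u)⟩
    have hk : F p b < k := hfk p ▸ hanti p (hfS p) hbS hfb
    filter_upwards [(hF b).continuousAt.eventually_lt continuousAt_const hk] with q hq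
    rw [← hfk q, (hanti q).lt_iff_gt hbS (hfS q)] at hq
    exact hq.trans (hb.trans_le (min_le_left a u))

theorem eventually_lt_iff_of_ne {X α : Type*} [TopologicalSpace X] [LinearOrder α]
    [TopologicalSpace α] [OrderClosedTopology α] {u v : X → α} {p : X} (hu : ContinuousAt u p)
    (hv : ContinuousAt v p) (h : v p ≠ u p) : ∀ᶠ q in 𝓝 p, (u q < v q ↔ u p < v p) := by
  rcases h.lt_or_gt with h | h
  · filter_upwards [hv.eventually_lt hu h] with q hq
    exact iff_of_false hq.not_gt h.not_gt
  · filter_upwards [hu.eventually_lt hv h] with q hq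
    exact iff_of_true hq h

theorem tendsto_measureReal_of_ae_eventually_mem_iff {E X : Type*} [MeasurableSpace E]
    {μ : Measure E} [IsFiniteMeasure μ] {l : Filter X} [l.IsCountablyGenerated]
    {A : X → Set E} {B : Set E} (hA : ∀ p, MeasurableSet (A p)) (hB : MeasurableSet B)
    (h : ∀ᵐ x ∂μ, ∀ᶠ p in l, x ∈ A p ↔ x ∈ B) :
    Tendsto (fun p => μ.real (A p)) l (𝓝 (μ.real B)) :=
  (ENNReal.tendsto_toReal (measure_ne_top μ B)).comp
    (tendsto_measure_of_ae_tendsto_indicator_of_isFiniteMeasure l hB hA h)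

theorem continuous_measureReal_of_ae_eventually_mem_iff {E X : Type*} [MeasurableSpace E]
    {μ : Measure E} [IsFiniteMeasure μ] [TopologicalSpace X] [FirstCountableTopology X]
    {A : X → Set E} (hA : ∀ p, MeasurableSet (A p))
    (h : ∀ p, ∀ᵐ x ∂μ, ∀ᶠ q in 𝓝 p, x ∈ A q ↔ x ∈ A p) : Continuous fun p => μ.real (A p) :=
  continuous_iff_continuousAt.2 fun p =>
    tendsto_measureReal_of_ae_eventually_mem_iff hA (hA p) (h p)

theorem measureReal_lt_of_isOpen_subset_sdiff {E : Type*} [TopologicalSpace E] [MeasurableSpace E]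
    {μ : Measure E} [IsFiniteMeasure μ] [μ.IsOpenPosMeasure] {A B U : Set E}
    (hA : MeasurableSet A) (hAB : A ⊆ B) (hU : IsOpen U) (hne : U.Nonempty) (hUBA : U ⊆ B \ A) :
    μ.real A < μ.real B := by
  rw [← sub_pos, ← measureReal_sdiff hAB hA]
  exact (ENNReal.toReal_pos (hU.measure_pos μ hne).ne' (measure_ne_top μ U)).trans_le
    (measureReal_mono hUBA)

theorem measureReal_compl_inter_compl_of_half {E : Type*} [MeasurableSpace E] {μ : Measure E}
    [IsProbabilityMeasure μ] {A B : Set E} (hA : MeasurableSet A) (hB : MeasurableSet B)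
    (hAhalf : μ.real A = 1 / 2) (hBhalf : μ.real B = 1 / 2) :
    μ.real (Aᶜ ∩ Bᶜ) = μ.real (A ∩ B) := by
  rw [← Set.compl_union, probReal_compl_eq_one_sub (hA.union hB)]
  linarith [measureReal_union_add_inter (μ := μ) (s := A) hB]

end Continuity

section HalfPlane

/-- The open half-plane on the left of a line of direction `θ`. -/
def leftHalfPlane (θ c : ℝ) : Set ℝ² := {x | c < leftForm θ x}

@[simp]
theorem mem_leftHalfPlane {θ c : ℝ} {x : ℝ²} : x ∈ leftHalfPlane θ c ↔ c < leftForm θ x := Iff.rfl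

theorem isOpen_leftHalfPlane (θ c : ℝ) : IsOpen (leftHalfPlane θ c) :=
  isOpen_lt continuous_const (leftForm θ).continuous

theorem measurableSet_leftHalfPlane (θ c : ℝ) : MeasurableSet (leftHalfPlane θ c) :=
  (isOpen_leftHalfPlane θ c).measurableSet

theorem isOpen_setOf_leftForm_lt (θ c : ℝ) : IsOpen {x | leftForm θ x < c} :=
  isOpen_lt (leftForm θ).continuous continuous_const

variable {μ : Measure ℝ²}

theorem leftHalfPlane_ae_eq_compl_of_leftForm_eq_neg {θ φ c : ℝ} (hφ : leftForm φ = -leftForm θ)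
    (h : ∀ᵐ x ∂μ, leftForm θ x ≠ c) :
    leftHalfPlane φ (-c) =ᵐ[μ] ((leftHalfPlane θ c)ᶜ : Set ℝ²) := by
  rw [eventuallyEq_set]
  filter_upwards [h] with x hx
  rw [mem_leftHalfPlane, hφ, neg_apply, neg_lt_neg_iff, Set.mem_compl_iff, mem_leftHalfPlane,
    not_lt, hx.le_iff_lt]

theorem strictAnti_measureReal_leftHalfPlane [IsFiniteMeasure μ] [μ.IsOpenPosMeasure] (θ : ℝ) :
    StrictAnti fun c => μ.real (leftHalfPlane θ c) := by
  intro a b hab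
  obtain ⟨c, hac, hcb⟩ := exists_between hab
  obtain ⟨x, hx⟩ := leftForm_surjective θ c
  exact measureReal_lt_of_isOpen_subset_sdiff (measurableSet_leftHalfPlane θ b)
    (fun y hy => hab.trans hy) ((isOpen_leftHalfPlane θ a).inter (isOpen_setOf_leftForm_lt θ b))
    ⟨x, hac.trans_eq hx.symm, hx.trans_lt hcb⟩
    fun y hy => ⟨hy.1, fun h => (mem_leftHalfPlane.1 h).not_gt hy.2⟩

theorem measureReal_inter_leftHalfPlane_lt [IsFiniteMeasure μ] [μ.IsOpenPosMeasure]
    {θ α β s t u : ℝ} (hα : 0 < α) (hαβ : α < β) (hβ : β < Real.pi)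
    (hstu : Real.sin β * t ≤ Real.sin (β - α) * s + Real.sin α * u) :
    μ.real (leftHalfPlane θ s ∩ leftHalfPlane (θ + β) u) <
      μ.real (leftHalfPlane θ s ∩ leftHalfPlane (θ + α) t) := by
  have hsinα : 0 < Real.sin α := Real.sin_pos_of_pos_of_lt_pi hα (hαβ.trans hβ)
  have hsinβ : 0 < Real.sin β := Real.sin_pos_of_pos_of_lt_pi (hα.trans hαβ) hβ
  have hsin : 0 < Real.sin (β - α) := Real.sin_pos_of_pos_of_lt_pi (by linarith) (by linarith)
  have hmem {x : ℝ²} (h : Real.sin (β - α) * s + Real.sin α * u <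
      Real.sin (β - α) * leftForm θ x + Real.sin α * leftForm (θ + β) x) :
      x ∈ leftHalfPlane (θ + α) t := by
    rw [← sin_mul_leftForm_add] at h
    exact lt_of_mul_lt_mul_left (hstu.trans_lt h) hsinβ.le
  obtain ⟨x, hxθ, hxβ⟩ := exists_leftForm_eq hsinβ.ne' θ
    (s + (Real.sin α + 1) / Real.sin (β - α)) (u - 1)
  refine measureReal_lt_of_isOpen_subset_sdiff
    (U := leftHalfPlane θ s ∩ leftHalfPlane (θ + α) t ∩ {x | leftForm (θ + β) x < u})
    ((measurableSet_leftHalfPlane _ _).inter (measurableSet_leftHalfPlane _ _))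
    (fun y ⟨hyθ, hyβ⟩ => ⟨hyθ, hmem ?_⟩)
    (((isOpen_leftHalfPlane _ _).inter (isOpen_leftHalfPlane _ _)).inter
      (isOpen_setOf_leftForm_lt _ _))
    ⟨x, ⟨?_, hmem ?_⟩, ?_⟩ fun y ⟨hy, hyβ⟩ => ⟨hy, fun h => (mem_leftHalfPlane.1 h.2).not_gt hyβ⟩
  · exact add_lt_add ((mul_lt_mul_iff_right₀ hsin).2 hyθ) ((mul_lt_mul_iff_right₀ hsinα).2 hyβ)
  · rw [mem_leftHalfPlane, hxθ]
    exact lt_add_of_pos_right s (by positivity)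
  · rw [hxθ, hxβ, mul_add, mul_div_cancel₀ _ hsin.ne']
    linarith
  · exact hxβ.trans_lt (sub_one_lt u)

end HalfPlane

section Halving

variable {μ : Measure ℝ²}

/-- The function `c` assigns to every direction `θ` a line of direction `θ` halving the probability
measure `μ`, continuously and consistently with reversing the direction. -/
structure IsHalving (μ : Measure ℝ²) (c : ℝ → ℝ) : Prop where
  continuous : Continuous c
  measureReal_leftHalfPlane (θ : ℝ) : μ.real (leftHalfPlane θ (c θ)) = 1 / 2
  add_pi (θ : ℝ) : c (θ + Real.pi) = -c θ

theorem continuous_measureReal_leftHalfPlane [IsFiniteMeasure μ]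
    (hline : ∀ θ c, ∀ᵐ x ∂μ, leftForm θ x ≠ c) :
    Continuous fun q : ℝ × ℝ => μ.real (leftHalfPlane q.1 q.2) := by
  refine continuous_measureReal_of_ae_eventually_mem_iff
    (fun _ => measurableSet_leftHalfPlane _ _) fun q => ?_
  filter_upwards [hline q.1 q.2] with x hx
  exact eventually_lt_iff_of_ne continuousAt_snd
    ((continuous_leftForm_apply x).comp continuous_fst).continuousAt hx

theorem exists_measureReal_leftHalfPlane_eq [IsProbabilityMeasure μ]
    (hline : ∀ θ c, ∀ᵐ x ∂μ, leftForm θ x ≠ c) (θ : ℝ) {k : ℝ} (hk₀ : 0 < k) (hk₁ : k < 1) :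
    ∃ c, μ.real (leftHalfPlane θ c) = k := by
  have htop : Tendsto (fun c => μ.real (leftHalfPlane θ c)) atTop (𝓝 0) := by
    rw [← measureReal_empty (μ := μ)]
    refine tendsto_measureReal_of_ae_eventually_mem_iff (measurableSet_leftHalfPlane θ) .empty
      (.of_forall fun x => ?_)
    filter_upwards [eventually_ge_atTop (leftForm θ x)] with c hc
    exact iff_of_false hc.not_gt id
  have hbot : Tendsto (fun c => μ.real (leftHalfPlane θ c)) atBot (𝓝 1) := by
    rw [← probReal_univ (μ := μ)]
    refine tendsto_measureReal_of_ae_eventually_mem_iff (measurableSet_leftHalfPlane θ) .univ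
      (.of_forall fun x => ?_)
    filter_upwards [eventually_lt_atBot (leftForm θ x)] with c hc
    exact iff_of_true hc trivial
  exact mem_range_of_exists_le_of_exists_ge
    ((continuous_measureReal_leftHalfPlane hline).comp (Continuous.prodMk_right θ))
    ((htop.eventually_lt_const hk₀).exists.imp fun _ h => h.le)
    ((hbot.eventually_const_lt hk₁).exists.imp fun _ h => h.le)

theorem exists_isHalving [IsProbabilityMeasure μ] [μ.IsOpenPosMeasure]
    (hline : ∀ θ c, ∀ᵐ x ∂μ, leftForm θ x ≠ c) : ∃ c, IsHalving μ c := by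
  obtain ⟨c, hc, -, hhalf⟩ := exists_continuous_eq_of_strictAntiOn
    (fun a => (continuous_measureReal_leftHalfPlane hline).comp (Continuous.prodMk_left a))
    isOpen_univ (fun θ => (strictAnti_measureReal_leftHalfPlane θ).strictAntiOn _) (k := 1 / 2)
    fun θ => (exists_measureReal_leftHalfPlane_eq hline θ (by norm_num) (by norm_num)).imp
      fun _ h => ⟨trivial, h⟩
  refine ⟨c, hc, hhalf, fun θ =>
    (strictAnti_measureReal_leftHalfPlane (μ := μ) (θ + Real.pi)).injective ?_⟩
  calc
    μ.real (leftHalfPlane (θ + Real.pi) (c (θ + Real.pi))) =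
        1 - μ.real (leftHalfPlane θ (c θ)) := by
      rw [show μ.real _ = 1 / 2 from hhalf _, show μ.real _ = 1 / 2 from hhalf _]
      norm_num
    _ = μ.real (leftHalfPlane (θ + Real.pi) (-c θ)) := by
      rw [measureReal_congr (leftHalfPlane_ae_eq_compl_of_leftForm_eq_neg (leftForm_add_pi θ)
        (hline θ (c θ))),
        probReal_compl_eq_one_sub (measurableSet_leftHalfPlane _ _)]

end Halving

section Wedge

/-- The intersection of the half-planes on the left of two of the lines described by `c`, those of
directions `θ` and `θ + α`. -/
def wedge (c : ℝ → ℝ) (θ α : ℝ) : Set ℝ² :=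
  leftHalfPlane θ (c θ) ∩ leftHalfPlane (θ + α) (c (θ + α))

variable {μ : Measure ℝ²} {c : ℝ → ℝ}

theorem IsHalving.leftHalfPlane_add_pi_ae_eq_compl (hc : IsHalving μ c)
    (hline : ∀ θ c, ∀ᵐ x ∂μ, leftForm θ x ≠ c) (θ : ℝ) :
    leftHalfPlane (θ + Real.pi) (c (θ + Real.pi)) =ᵐ[μ]
      ((leftHalfPlane θ (c θ))ᶜ : Set ℝ²) := by
  rw [hc.add_pi]
  exact leftHalfPlane_ae_eq_compl_of_leftForm_eq_neg (leftForm_add_pi θ) (hline θ (c θ))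

theorem IsHalving.measureReal_wedge_zero (hc : IsHalving μ c) (θ : ℝ) :
    μ.real (wedge c θ 0) = 1 / 2 := by
  rw [wedge, add_zero, Set.inter_self, hc.measureReal_leftHalfPlane]

theorem IsHalving.measureReal_wedge_pi (hc : IsHalving μ c)
    (hline : ∀ θ c, ∀ᵐ x ∂μ, leftForm θ x ≠ c) (θ : ℝ) : μ.real (wedge c θ Real.pi) = 0 := by
  rw [wedge, measureReal_congr ((ae_eq_refl _).inter (hc.leftHalfPlane_add_pi_ae_eq_compl hline θ)),
    Set.inter_compl_self, measureReal_empty]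

/-- For `0 < α < β < π`, the lines of directions `θ`, `θ + α` and `θ + β` described by `c` are
concurrent exactly when this quantity vanishes. -/
noncomputable def concurrencyDefect (c : ℝ → ℝ) (θ α β : ℝ) : ℝ :=
  Real.sin β * c (θ + α) - (Real.sin (β - α) * c θ + Real.sin α * c (θ + β))

theorem IsHalving.concurrencyDefect_add_pi (hc : IsHalving μ c) (θ α β : ℝ) :
    concurrencyDefect c (θ + Real.pi) α β = -concurrencyDefect c θ α β := by
  simp only [concurrencyDefect, add_right_comm θ, hc.add_pi]
  ring

theorem exists_leftForm_eq_of_concurrencyDefect_eq_zero {θ α β : ℝ} (hβ : Real.sin β ≠ 0)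
    (h : concurrencyDefect c θ α β = 0) :
    ∃ r, leftForm θ r = c θ ∧ leftForm (θ + α) r = c (θ + α) ∧ leftForm (θ + β) r = c (θ + β) := by
  obtain ⟨r, hrθ, hrβ⟩ := exists_leftForm_eq hβ θ (c θ) (c (θ + β))
  refine ⟨r, hrθ, mul_left_cancel₀ hβ ?_, hrβ⟩
  rw [sin_mul_leftForm_add, hrθ, hrβ]
  exact (sub_eq_zero.1 h).symm

variable [IsProbabilityMeasure μ]

theorem IsHalving.measureReal_wedge_add_pi (hc : IsHalving μ c)
    (hline : ∀ θ c, ∀ᵐ x ∂μ, leftForm θ x ≠ c) (θ α : ℝ) :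
    μ.real (wedge c (θ + Real.pi) α) = μ.real (wedge c θ α) := by
  rw [wedge, add_right_comm θ,
    measureReal_congr ((hc.leftHalfPlane_add_pi_ae_eq_compl hline θ).inter
      (hc.leftHalfPlane_add_pi_ae_eq_compl hline (θ + α))), wedge]
  exact measureReal_compl_inter_compl_of_half (measurableSet_leftHalfPlane _ _)
    (measurableSet_leftHalfPlane _ _) (hc.measureReal_leftHalfPlane _)
    (hc.measureReal_leftHalfPlane _)

theorem IsHalving.continuous_measureReal_wedge (hc : IsHalving μ c)
    (hline : ∀ θ c, ∀ᵐ x ∂μ, leftForm θ x ≠ c) :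
    Continuous fun q : ℝ × ℝ => μ.real (wedge c q.1 q.2) := by
  refine continuous_measureReal_of_ae_eventually_mem_iff (fun _ =>
    (measurableSet_leftHalfPlane _ _).inter (measurableSet_leftHalfPlane _ _)) fun q => ?_
  filter_upwards [hline q.1 (c q.1), hline (q.1 + q.2) (c (q.1 + q.2))] with x hx₁ hx₂
  have hside {φ : ℝ × ℝ → ℝ} (hφ : Continuous φ) (hx : leftForm (φ q) x ≠ c (φ q)) :
      ∀ᶠ p in 𝓝 q, (c (φ p) < leftForm (φ p) x ↔ c (φ q) < leftForm (φ q) x) :=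
    eventually_lt_iff_of_ne (hc.continuous.comp hφ).continuousAt
      ((continuous_leftForm_apply x).comp hφ).continuousAt hx
  filter_upwards [hside continuous_fst hx₁, hside continuous_add hx₂] with p hp₁ hp₂
  exact and_congr hp₁ hp₂

variable [μ.IsOpenPosMeasure]

theorem IsHalving.strictAntiOn_measureReal_wedge (hc : IsHalving μ c)
    (hline : ∀ θ c, ∀ᵐ x ∂μ, leftForm θ x ≠ c) (θ : ℝ) :
    StrictAntiOn (fun α => μ.real (wedge c θ α)) (Set.Ioo 0 Real.pi) := by
  have key {φ α β : ℝ} (hα : 0 < α) (hαβ : α < β) (hβ : β < Real.pi)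
      (h : concurrencyDefect c φ α β ≤ 0) : μ.real (wedge c φ β) < μ.real (wedge c φ α) :=
    measureReal_inter_leftHalfPlane_lt hα hαβ hβ (sub_nonpos.1 h)
  intro α hα β hβ hαβ
  rcases le_total (concurrencyDefect c θ α β) 0 with h | h
  · exact key hα.1 hαβ hβ.2 h
  · have h' := key (φ := θ + Real.pi) hα.1 hαβ hβ.2
      (by rw [hc.concurrencyDefect_add_pi]; exact neg_nonpos.2 h)
    rwa [hc.measureReal_wedge_add_pi hline, hc.measureReal_wedge_add_pi hline] at h'

theorem IsHalving.exists_measureReal_wedge_eq (hc : IsHalving μ c)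
    (hline : ∀ θ c, ∀ᵐ x ∂μ, leftForm θ x ≠ c) {k : ℝ} (hk₀ : 0 < k) (hk : k < 1 / 2) :
    ∃ f : ℝ → ℝ, Continuous f ∧ (∀ θ, f θ ∈ Set.Ioo 0 Real.pi) ∧
      (∀ θ, μ.real (wedge c θ (f θ)) = k) ∧ ∀ θ, f (θ + Real.pi) = f θ := by
  have hcont := hc.continuous_measureReal_wedge hline
  have hanti := hc.strictAntiOn_measureReal_wedge hline
  obtain ⟨f, hf, hfmem, hfk⟩ := exists_continuous_eq_of_strictAntiOn
    (F := fun θ α => μ.real (wedge c θ α)) (k := k)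
    (fun α => hcont.comp (Continuous.prodMk_left α)) isOpen_Ioo hanti fun θ =>
      intermediate_value_Ioo' Real.pi_pos.le (hcont.comp (Continuous.prodMk_right θ)).continuousOn
        (by simpa only [Function.comp_apply, hc.measureReal_wedge_zero,
          hc.measureReal_wedge_pi hline] using ⟨hk₀, hk⟩)
  refine ⟨f, hf, hfmem, hfk, fun θ => (hanti θ).injOn (hfmem _) (hfmem θ) ?_⟩
  simp only [hfk]
  rw [← hc.measureReal_wedge_add_pi hline, hfk]

theorem exists_eq_zero_of_add_eq_neg {G : ℝ → ℝ} (hG : Continuous G) {T : ℝ}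
    (hT : ∀ θ, G (θ + T) = -G θ) : ∃ θ, G θ = 0 := by
  rcases le_total (G 0) 0 with h | h
  · exact mem_range_of_exists_le_of_exists_ge hG ⟨0, h⟩ ⟨0 + T, by linarith [hT 0]⟩
  · exact mem_range_of_exists_le_of_exists_ge hG ⟨0 + T, by linarith [hT 0]⟩ ⟨0, h⟩

theorem IsHalving.exists_concurrent (hc : IsHalving μ c)
    (hline : ∀ θ c, ∀ᵐ x ∂μ, leftForm θ x ≠ c) :
    ∃ θ α β : ℝ, 0 < α ∧ α < β ∧ β < Real.pi ∧
      μ.real (wedge c θ α) = 1 / 3 ∧ μ.real (wedge c θ β) = 1 / 6 ∧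
      ∃ r, leftForm θ r = c θ ∧ leftForm (θ + α) r = c (θ + α) ∧
        leftForm (θ + β) r = c (θ + β) := by
  obtain ⟨f, hf, hfmem, hfk, hfπ⟩ :=
    hc.exists_measureReal_wedge_eq hline (k := 1 / 3) (by norm_num) (by norm_num)
  obtain ⟨g, hg, hgmem, hgk, hgπ⟩ :=
    hc.exists_measureReal_wedge_eq hline (k := 1 / 6) (by norm_num) (by norm_num)
  have hcont : Continuous fun θ => concurrencyDefect c θ (f θ) (g θ) := by
    have := hc.continuous
    unfold concurrencyDefect
    fun_prop
  obtain ⟨θ, hθ⟩ := exists_eq_zero_of_add_eq_neg hcont (T := Real.pi) fun θ => by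
    rw [hfπ, hgπ, hc.concurrencyDefect_add_pi]
  refine ⟨θ, f θ, g θ, (hfmem θ).1, ?_, (hgmem θ).2, hfk θ, hgk θ,
    exists_leftForm_eq_of_concurrencyDefect_eq_zero
      (Real.sin_pos_of_pos_of_lt_pi (hgmem θ).1 (hgmem θ).2).ne' hθ⟩
  rw [← (hc.strictAntiOn_measureReal_wedge hline θ).lt_iff_gt (hgmem θ) (hfmem θ)]
  simp only [hfk, hgk]
  norm_num

end Wedge

section Sector

/-- The directions, in counterclockwise order, of three lines through a point, each of them taken
with both orientations. -/
structure IsHexagonal (φ : Fin 6 → ℝ) : Prop where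
  leftForm_add_three (j : Fin 6) : leftForm (φ (j + 3)) = -leftForm (φ j)
  sin_sub_pos_one (j : Fin 6) : 0 < Real.sin (φ (j + 1) - φ j)
  sin_sub_pos_two (j : Fin 6) : 0 < Real.sin (φ (j + 2) - φ j)

theorem isHexagonal_of_lt {θ α β : ℝ} (hα : 0 < α) (hαβ : α < β) (hβ : β < Real.pi) :
    IsHexagonal ![θ, θ + α, θ + β, θ + Real.pi, θ + α + Real.pi, θ + β + Real.pi] := by
  have hsinα : 0 < Real.sin α := Real.sin_pos_of_pos_of_lt_pi hα (hαβ.trans hβ)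
  have hsinβ : 0 < Real.sin β := Real.sin_pos_of_pos_of_lt_pi (hα.trans hαβ) hβ
  have hsin : 0 < Real.sin (β - α) := Real.sin_pos_of_pos_of_lt_pi (by linarith) (by linarith)
  have hsin' : Real.sin (α - β) < 0 := by rwa [← neg_sub, Real.sin_neg, neg_lt_zero]
  constructor <;> intro j <;> fin_cases j <;>
    simp [leftForm_add_pi, add_sub_right_comm _ Real.pi, sub_add_eq_sub_sub _ _ Real.pi,
      hsinα, hsinβ, hsin, hsin']

/-- The open sector with apex `r` on the left of the lines of directions `φ j` and `φ (j + 2)`. -/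
def sector (φ : Fin 6 → ℝ) (r : ℝ²) (j : Fin 6) : Set ℝ² :=
  leftHalfPlane (φ j) (leftForm (φ j) r) ∩ leftHalfPlane (φ (j + 2)) (leftForm (φ (j + 2)) r)

theorem measurableSet_sector (φ : Fin 6 → ℝ) (r : ℝ²) (j : Fin 6) :
    MeasurableSet (sector φ r j) :=
  (measurableSet_leftHalfPlane _ _).inter (measurableSet_leftHalfPlane _ _)

namespace IsHexagonal

variable {φ : Fin 6 → ℝ} {r y z : ℝ²} {j : Fin 6}

theorem leftForm_pos_of_mem_sector (hφ : IsHexagonal φ) (hy : y ∈ sector φ r j) :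
    0 < leftForm (φ j) (y - r) ∧ 0 < leftForm (φ (j + 1)) (y - r) ∧
      0 < leftForm (φ (j + 2)) (y - r) := by
  have h₀ : 0 < leftForm (φ j) (y - r) := by simpa using hy.1
  have h₂ : 0 < leftForm (φ (j + 2)) (y - r) := by simpa using hy.2
  have hrel := sin_mul_leftForm_add (φ j) (φ (j + 1) - φ j) (φ (j + 2) - φ j) (y - r)
  rw [add_sub_cancel, add_sub_cancel, sub_sub_sub_cancel_right] at hrel
  have hsin : 0 < Real.sin (φ (j + 2) - φ (j + 1)) := by
    simpa [add_assoc] using hφ.sin_sub_pos_one (j + 1)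
  refine ⟨h₀, pos_of_mul_pos_right ?_ (hφ.sin_sub_pos_two j).le, h₂⟩
  rw [hrel]
  exact add_pos (mul_pos hsin h₀) (mul_pos (hφ.sin_sub_pos_one j) h₂)

theorem sector_subset_leftHalfPlane (hφ : IsHexagonal φ) :
    sector φ r j ⊆ leftHalfPlane (φ (j + 1)) (leftForm (φ (j + 1)) r) := fun _ hy => by
  simpa using (hφ.leftForm_pos_of_mem_sector hy).2.1

theorem signedArea_pos (hφ : IsHexagonal φ) (hy : y ∈ sector φ r j)
    (hz : z ∈ sector φ r (j + 1) ∨ z ∈ sector φ r (j + 2)) :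
    0 < signedArea (y - r) (z - r) := by
  have hz' : 0 < leftForm (φ (j + 2)) (z - r) ∧ 0 < leftForm (φ (j + 3)) (z - r) := by
    rcases hz with hz | hz
    · simpa [add_assoc] using (hφ.leftForm_pos_of_mem_sector hz).2
    · have := hφ.leftForm_pos_of_mem_sector hz
      exact ⟨this.1, by simpa [add_assoc] using this.2.1⟩
  obtain ⟨hy₀, -, hy₂⟩ := hφ.leftForm_pos_of_mem_sector hy
  rw [hφ.leftForm_add_three, neg_apply, neg_pos] at hz'
  refine pos_of_mul_pos_right ?_ (hφ.sin_sub_pos_two j).le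
  rw [← leftForm_mul_sub_leftForm_mul, sub_pos]
  exact (mul_neg_of_pos_of_neg hy₂ hz'.2).trans (mul_pos hy₀ hz'.1)

theorem pairwise_disjoint_sector (hφ : IsHexagonal φ) (r : ℝ²) :
    Pairwise (Function.onFun Disjoint (sector φ r)) := by
  have hadd_three (i : Fin 6) {y : ℝ²} (hy : y ∈ sector φ r i) : y ∉ sector φ r (i + 3) := by
    intro hy'
    have := (hφ.leftForm_pos_of_mem_sector hy').1
    rw [hφ.leftForm_add_three, neg_apply, neg_pos] at this
    exact this.not_gt (hφ.leftForm_pos_of_mem_sector hy).1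
  have hadd (i : Fin 6) {y : ℝ²} (hy : y ∈ sector φ r i) :
      ¬(y ∈ sector φ r (i + 1) ∨ y ∈ sector φ r (i + 2)) := fun h =>
    (hφ.signedArea_pos hy h).ne' (signedArea_self _)
  intro i j hij
  refine Set.disjoint_left.2 fun y hi hj => ?_
  have hcases : ∀ i j : Fin 6, i ≠ j →
      j = i + 1 ∨ j = i + 2 ∨ j = i + 3 ∨ i = j + 1 ∨ i = j + 2 := by decide
  rcases hcases i j hij with rfl | rfl | rfl | rfl | rfl
  · exact hadd i hi (.inl hj)
  · exact hadd i hi (.inr hj)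
  · exact hadd_three i hi hj
  · exact hadd j hj (.inl hi)
  · exact hadd j hj (.inr hi)

theorem leftHalfPlane_add_three_ae_eq_compl {μ : Measure ℝ²} (hφ : IsHexagonal φ)
    (hline : ∀ θ c, ∀ᵐ x ∂μ, leftForm θ x ≠ c) (r : ℝ²) (j : Fin 6) :
    leftHalfPlane (φ (j + 3)) (leftForm (φ (j + 3)) r) =ᵐ[μ]
      ((leftHalfPlane (φ j) (leftForm (φ j) r))ᶜ : Set ℝ²) := by
  rw [hφ.leftForm_add_three, neg_apply]
  exact leftHalfPlane_ae_eq_compl_of_leftForm_eq_neg (hφ.leftForm_add_three j) (hline _ _)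

end IsHexagonal

section Mass

variable {μ : Measure ℝ²} [IsProbabilityMeasure μ] {c : ℝ → ℝ} {φ : Fin 6 → ℝ} {r : ℝ²}

theorem IsHexagonal.measureReal_sector_add_three (hφ : IsHexagonal φ)
    (hline : ∀ θ c, ∀ᵐ x ∂μ, leftForm θ x ≠ c)
    (hhalf : ∀ j, μ.real (leftHalfPlane (φ j) (leftForm (φ j) r)) = 1 / 2) (j : Fin 6) :
    μ.real (sector φ r (j + 3)) = μ.real (sector φ r j) := by
  rw [sector, add_right_comm,
    measureReal_congr ((hφ.leftHalfPlane_add_three_ae_eq_compl hline r j).inter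
      (hφ.leftHalfPlane_add_three_ae_eq_compl hline r (j + 2))), sector]
  exact measureReal_compl_inter_compl_of_half (measurableSet_leftHalfPlane _ _)
    (measurableSet_leftHalfPlane _ _) (hhalf _) (hhalf _)

theorem IsHexagonal.measureReal_sector_eq (hφ : IsHexagonal φ)
    (hline : ∀ θ c, ∀ᵐ x ∂μ, leftForm θ x ≠ c)
    (hhalf : ∀ j, μ.real (leftHalfPlane (φ j) (leftForm (φ j) r)) = 1 / 2)
    (h₁ : μ.real (leftHalfPlane (φ 0) (leftForm (φ 0) r) ∩
      leftHalfPlane (φ 1) (leftForm (φ 1) r)) = 1 / 3)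
    (h₂ : μ.real (sector φ r 0) = 1 / 6) (j : Fin 6) : μ.real (sector φ r j) = 1 / 6 := by
  set H : Fin 6 → Set ℝ² := fun j => leftHalfPlane (φ j) (leftForm (φ j) r)
  have hmeas (j) : MeasurableSet (H j) := measurableSet_leftHalfPlane _ _
  have hcompl (j) : H (j + 3) =ᵐ[μ] ((H j)ᶜ : Set ℝ²) :=
    hφ.leftHalfPlane_add_three_ae_eq_compl hline r j
  have hnext (j) : μ.real (sector φ r (j + 1)) = 1 / 2 - μ.real (H j ∩ H (j + 1)) := by
    have hsplit := measureReal_sdiff_add_inter (μ := μ) (s := H (j + 1)) (hmeas j)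
    rw [Set.inter_comm, show μ.real (H (j + 1)) = 1 / 2 from hhalf _] at hsplit
    rw [← hsplit, add_sub_cancel_right, sector, add_assoc, show (1 + 2 : Fin 6) = 3 from rfl,
      measureReal_congr ((ae_eq_refl _).inter (hcompl j))]
    rfl
  have hA₁ : μ.real (sector φ r 1) = 1 / 6 := by
    rw [← zero_add 1, hnext, zero_add, h₁]
    norm_num
  have hinner : μ.real (H 1 ∩ H 2 ∩ H 0) = 1 / 6 := by
    rw [← h₂, ← Set.inter_eq_left.2 (hφ.sector_subset_leftHalfPlane (r := r) (j := 0)), sector]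
    congr 1
    ac_rfl
  have houter : μ.real ((H 1 ∩ H 2) \ H 0) = 1 / 6 := by
    rw [← hA₁, ← Set.inter_eq_left.2 (hφ.sector_subset_leftHalfPlane (r := r) (j := 1)), sector,
      Set.inter_right_comm]
    exact measureReal_congr ((ae_eq_refl _).inter (hcompl 0).symm)
  have hA₂ : μ.real (sector φ r 2) = 1 / 6 := by
    have hsplit := measureReal_inter_add_sdiff (μ := μ) (s := H 1 ∩ H 2) (hmeas 0)
    have hA₂ : μ.real (sector φ r 2) = 1 / 2 - μ.real (H 1 ∩ H 2) := hnext 1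
    linarith
  have hadd := hφ.measureReal_sector_add_three hline hhalf
  fin_cases j
  exacts [h₂, hA₁, hA₂, (hadd 0).trans h₂, (hadd 1).trans hA₁, (hadd 2).trans hA₂]

end Mass

end Sector

theorem exists_sectors_measureReal_eq {μ : Measure ℝ²} [IsProbabilityMeasure μ]
    [μ.IsOpenPosMeasure] (hline : ∀ θ c, ∀ᵐ x ∂μ, leftForm θ x ≠ c) :
    ∃ φ r, IsHexagonal φ ∧ ∀ j, μ.real (sector φ r j) = 1 / 6 := by
  obtain ⟨c, hc⟩ := exists_isHalving hline
  obtain ⟨θ, α, β, hα, hαβ, hβ, hthird, hsixth, r, hr₀, hr₁, hr₂⟩ := hc.exists_concurrent hline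
  have hφ := isHexagonal_of_lt (θ := θ) hα hαβ hβ
  set φ : Fin 6 → ℝ := ![θ, θ + α, θ + β, θ + Real.pi, θ + α + Real.pi, θ + β + Real.pi]
  have hr : ∀ j, leftForm (φ j) r = c (φ j) := by
    intro j
    fin_cases j <;> simp [φ, hr₀, hr₁, hr₂, leftForm_add_pi, hc.add_pi]
  refine ⟨φ, r, hφ, hφ.measureReal_sector_eq hline (fun j => ?_) ?_ ?_⟩
  · rw [hr, hc.measureReal_leftHalfPlane]
  · rw [hr, hr]
    exact hthird
  · rw [sector, hr, hr]
    exact hsixth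

section Hexagon

theorem eight_le_card_of_cyclic_of_opposite {𝓕 : Finset (Finset (Fin 6))}
    (hcyc : ∀ i, {i, i + 2, i + 4} ∈ 𝓕)
    (hopp : ∀ i, ({i, i + 1, i + 3} ∈ 𝓕 ∧ {i, i + 2, i + 3} ∈ 𝓕) ∨
      ({i + 3, i + 4, i} ∈ 𝓕 ∧ {i + 3, i + 5, i} ∈ 𝓕)) : 8 ≤ #𝓕 := by
  let side (i : Fin 6) (b : Bool) : Finset (Finset (Fin 6)) :=
    if b then {{i, i + 1, i + 3}, {i, i + 2, i + 3}} else {{i + 3, i + 4, i}, {i + 3, i + 5, i}}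
  have hside (i) : ∃ b, side i b ⊆ 𝓕 := by
    rcases hopp i with h | h
    · exact ⟨true, by simpa [side, Finset.insert_subset_iff] using h⟩
    · exact ⟨false, by simpa [side, Finset.insert_subset_iff] using h⟩
  choose b hb using hside
  have hcard : ∀ b₀ b₁ b₂, #(({{0, 2, 4}, {1, 3, 5}} : Finset (Finset (Fin 6))) ∪
      side 0 b₀ ∪ side 1 b₁ ∪ side 2 b₂) = 8 := by decide
  rw [← hcard (b 0) (b 1) (b 2)]
  exact Finset.card_le_card (Finset.union_subset (Finset.union_subset (Finset.union_subset
    (Finset.insert_subset (hcyc 0) (Finset.singleton_subset_iff.2 (hcyc 1))) (hb 0)) (hb 1)) (hb 2))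

open Classical in
theorem eight_le_card_filter_mem_convexHull {y : Fin 6 → ℝ²} {r : ℝ²}
    (h₁ : ∀ j, 0 < signedArea (y j - r) (y (j + 1) - r))
    (h₂ : ∀ j, 0 < signedArea (y j - r) (y (j + 2) - r)) :
    8 ≤ #{s ∈ Finset.univ.powersetCard 3 | r ∈ convexHull ℝ (y '' (s : Finset (Fin 6)))} := by
  have hmem {i j k : Fin 6} (hijk : #({i, j, k} : Finset (Fin 6)) = 3)
      (hij : 0 < signedArea (y i - r) (y j - r)) (hjk : 0 < signedArea (y j - r) (y k - r))
      (hki : 0 ≤ signedArea (y k - r) (y i - r)) :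
      {i, j, k} ∈ ({s ∈ Finset.univ.powersetCard 3 |
        r ∈ convexHull ℝ (y '' (s : Finset (Fin 6)))} : Finset (Finset (Fin 6))) := by
    rw [Finset.mem_filter, Finset.mem_powersetCard_univ]
    refine ⟨hijk, ?_⟩
    simpa [Set.image_insert_eq] using mem_convexHull_of_signedArea hij hjk hki
  have hcyc (i : Fin 6) :=
    hmem ((by decide : ∀ i : Fin 6, #({i, i + 2, i + 4} : Finset _) = 3) i)
      (h₂ i) (by simpa [add_assoc] using h₂ (i + 2)) (by simpa [add_assoc] using (h₂ (i + 4)).le)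
  have hopp (i : Fin 6) (h : 0 ≤ signedArea (y (i + 3) - r) (y i - r)) :=
    And.intro
      (hmem ((by decide : ∀ i : Fin 6, #({i, i + 1, i + 3} : Finset _) = 3) i)
        (h₁ i) (by simpa [add_assoc] using h₂ (i + 1)) h)
      (hmem ((by decide : ∀ i : Fin 6, #({i, i + 2, i + 3} : Finset _) = 3) i)
        (h₂ i) (by simpa [add_assoc] using h₁ (i + 2)) h)
  refine eight_le_card_of_cyclic_of_opposite hcyc fun i => ?_
  rcases le_total 0 (signedArea (y (i + 3) - r) (y i - r)) with h | h
  · exact .inl (hopp i h)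
  · rw [signedArea_swap, neg_nonpos] at h
    right
    simpa [add_assoc] using hopp (i + 3) (by simpa [add_assoc] using h)

end Hexagon

section Embeddings

variable {ι : Type*} [Fintype ι]

open Classical in
theorem card_filter_map_univ_eq {k : ℕ} {t : Finset ι} (ht : #t = k) :
    #{f : Fin k ↪ ι | Finset.univ.map f = t} = k.factorial := by
  have hinj : Function.Injective fun e : Fin k ↪ t => e.trans (.subtype _) := fun e e' h => by
    ext j
    exact DFunLike.congr_fun h j
  calc _ = #(Finset.univ.image fun e : Fin k ↪ t => e.trans (.subtype _)) := by
        congr 1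
        ext f
        simp only [Finset.mem_filter_univ, Finset.mem_image, Finset.mem_univ, true_and]
        constructor
        · rintro rfl
          exact ⟨f.codRestrict _ fun j => Finset.mem_map_of_mem f (Finset.mem_univ j), rfl⟩
        · rintro ⟨e, rfl⟩
          refine Finset.eq_of_subset_of_card_le (fun i hi => ?_) (by simp [ht])
          obtain ⟨j, -, rfl⟩ := Finset.mem_map.1 hi
          exact (e j).2
    _ = k.factorial := by
        rw [Finset.card_image_of_injective _ hinj, Finset.card_univ, Fintype.card_embedding_eq,
          Fintype.card_coe, Fintype.card_fin, ht, Nat.descFactorial_self]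

open Classical in
theorem card_filter_map_univ (k : ℕ) (Q : Finset ι → Prop) :
    #{f : Fin k ↪ ι | Q (Finset.univ.map f)} =
      k.factorial * #{t ∈ Finset.univ.powersetCard k | Q t} := by
  rw [Finset.card_eq_sum_card_fiberwise (f := fun f => Finset.univ.map f)
    (t := {t ∈ Finset.univ.powersetCard k | Q t}), mul_comm, ← smul_eq_mul, ← Finset.sum_const]
  · refine Finset.sum_congr rfl fun t ht => ?_
    obtain ⟨ht, hQ⟩ := Finset.mem_filter.1 ht
    rw [← card_filter_map_univ_eq (Finset.mem_powersetCard_univ.1 ht), Finset.filter_filter]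
    refine congrArg Finset.card (Finset.filter_congr fun f _ => and_iff_right_of_imp ?_)
    rintro rfl
    exact hQ
  · intro f hf
    simpa using hf

end Embeddings

section ConvexHull

variable {κ E : Type*} [AddCommGroup E] [Module ℝ E]

theorem convexHull_range_eq_image_stdSimplex [Fintype κ] (y : κ → E) :
    convexHull ℝ (Set.range y) = Fintype.linearCombination ℝ y '' stdSimplex ℝ κ := by
  classical
  rw [← convexHull_rangle_single_eq_stdSimplex, LinearMap.image_convexHull, ← Set.range_comp]
  congr with i
  simp [Fintype.linearCombination_apply_single]

variable [Finite κ] [TopologicalSpace E] [IsTopologicalAddGroup E] [ContinuousSMul ℝ E]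
  [T2Space E]

theorem isClosed_setOf_mem_convexHull_range :
    IsClosed {p : (κ → E) × E | p.2 ∈ convexHull ℝ (Set.range p.1)} := by
  cases nonempty_fintype κ
  have hclosed : IsClosed {q : stdSimplex ℝ κ × ((κ → E) × E) |
      ∑ i, q.1.1 i • q.2.1 i = q.2.2} :=
    isClosed_eq (continuous_finsetSum _ fun i _ =>
      ((continuous_apply i).comp (continuous_subtype_val.comp continuous_fst)).smul (by fun_prop))
      (by fun_prop)
  convert isClosedMap_snd_of_compactSpace _ hclosed using 1
  ext p
  simp [convexHull_range_eq_image_stdSimplex, Fintype.linearCombination_apply]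

theorem isClosed_setOf_mem_convexHull_range_left (r : E) :
    IsClosed {y : κ → E | r ∈ convexHull ℝ (Set.range y)} :=
  isClosed_setOf_mem_convexHull_range.preimage (f := fun y : κ → E => (y, r)) (by fun_prop)

end ConvexHull

section ProductMeasure

variable {ι κ Ω : Type*} [Fintype ι] [Fintype κ] [MeasurableSpace Ω]

theorem cond_univ_pi (μ : ι → Measure Ω) [∀ i, IsFiniteMeasure (μ i)] {A : ι → Set Ω}
    (hA : ∀ i, MeasurableSet (A i)) :
    (Measure.pi μ)[|Set.univ.pi A] = Measure.pi fun i => (μ i)[|A i] := by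
  refine (Measure.pi_eq fun s _ => ?_).symm
  simp only [cond_apply (MeasurableSet.univ_pi hA), cond_apply (hA _), ← Set.pi_inter_distrib,
    Measure.pi_pi, Finset.prod_mul_distrib]
  rw [ENNReal.prod_inv_distrib]
  exact fun i _ j _ _ => .inr (measure_ne_top _ _)

theorem map_comp_pi (μ : ι → Measure Ω) [∀ i, IsProbabilityMeasure (μ i)] (f : κ ↪ ι) :
    (Measure.pi μ).map (fun y => y ∘ f) = Measure.pi (μ ∘ f) := by
  have hindep := iIndepFun_pi (μ := μ) (X := fun _ => id) fun i => aemeasurable_id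
  have h := (hindep.precomp f.injective).map_fun_eq_pi_map fun i =>
    (measurable_pi_apply _).aemeasurable
  simpa [Function.comp_def, (measurePreserving_eval μ _).map_eq] using h

open Classical in
theorem le_sum_measure_of_ae_le_card_filter {μ : Measure Ω} [IsProbabilityMeasure μ] {s : ι → Set Ω}
    (hs : ∀ i, MeasurableSet (s i)) {c : ℕ} (h : ∀ᵐ ω ∂μ, c ≤ #{i | ω ∈ s i}) :
    c ≤ ∑ i, μ (s i) := by
  calc (c : ℝ≥0∞) = ∫⁻ _, c ∂μ := by simp
    _ ≤ ∫⁻ ω, ∑ i, (s i).indicator 1 ω ∂μ := by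
        refine lintegral_mono_ae (h.mono fun ω hω => ?_)
        simpa [Set.indicator_apply] using hω
    _ = ∑ i, μ (s i) := by
        rw [lintegral_finsetSum _ fun i _ => measurable_one.indicator (hs i)]
        simp [hs]

open Classical in
theorem mul_pow_le_measure_pi_of_le_card_filter {μ : Measure Ω} [IsProbabilityMeasure μ]
    {A : ι → Set Ω} (hA : ∀ i, MeasurableSet (A i)) (hdisj : Pairwise (Function.onFun Disjoint A))
    {p : ℝ≥0∞} (hp : p ≠ 0) (hμ : ∀ i, μ (A i) = p) {T : Set (κ → Ω)} (hT : MeasurableSet T) {c : ℕ}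
    (hc : ∀ y, (∀ i, y i ∈ A i) → c ≤ #{f : κ ↪ ι | y ∘ f ∈ T}) :
    c * p ^ Fintype.card κ ≤ Measure.pi (fun _ : κ => μ) T := by
  set ν : ι → Measure Ω := fun i => μ[|A i]
  have hν (i) : IsProbabilityMeasure (ν i) := cond_isProbabilityMeasure (by rwa [hμ])
  have hae : ∀ᵐ y ∂Measure.pi ν, c ≤ #{f : κ ↪ ι | y ∘ f ∈ T} := by
    have hmem (i) : ∀ᵐ y ∂Measure.pi ν, y i ∈ A i :=
      (measurePreserving_eval ν i).quasiMeasurePreserving.ae (ae_cond_mem (hA i))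
    filter_upwards [eventually_all.2 hmem] with y hy using hc y hy
  have hmeas (f : κ ↪ ι) : MeasurableSet (Set.univ.pi (A ∘ f)) := .univ_pi fun i => hA (f i)
  have hbox (f : κ ↪ ι) : Measure.pi ν ((fun y => y ∘ f) ⁻¹' T) * p ^ Fintype.card κ =
      Measure.pi (fun _ : κ => μ) (T ∩ Set.univ.pi (A ∘ f)) := by
    rw [← Measure.map_apply (by fun_prop) hT, map_comp_pi]
    have hcond : (Measure.pi fun _ : κ => μ)[|Set.univ.pi (A ∘ f)] = Measure.pi (ν ∘ f) :=
      cond_univ_pi _ fun i => hA (f i)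
    have hpi : Measure.pi (fun _ : κ => μ) (Set.univ.pi (A ∘ f)) = p ^ Fintype.card κ := by
      simp [Measure.pi_pi, hμ]
    rw [← hcond, ← hpi, cond_mul_eq_inter (hmeas f), Set.inter_comm]
  calc c * p ^ Fintype.card κ
      ≤ (∑ f : κ ↪ ι, Measure.pi ν ((fun y => y ∘ f) ⁻¹' T)) * p ^ Fintype.card κ := by
        gcongr
        exact le_sum_measure_of_ae_le_card_filter (fun f => hT.preimage (by fun_prop)) hae
    _ = ∑ f : κ ↪ ι, Measure.pi (fun _ : κ => μ) (T ∩ Set.univ.pi (A ∘ f)) := by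
        rw [Finset.sum_mul]
        exact Finset.sum_congr rfl fun f _ => hbox f
    _ = Measure.pi (fun _ : κ => μ) (⋃ f : κ ↪ ι, T ∩ Set.univ.pi (A ∘ f)) := by
        rw [measure_iUnion, tsum_fintype]
        · intro f g hfg
          obtain ⟨i, hi⟩ := DFunLike.ne_iff.1 hfg
          exact (Set.disjoint_univ_pi.2 ⟨i, hdisj hi⟩).mono Set.inter_subset_right
            Set.inter_subset_right
        · exact fun f => hT.inter (hmeas f)
    _ ≤ _ := measure_mono (Set.iUnion_subset fun f => Set.inter_subset_left)

end ProductMeasure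

open Classical in
theorem IsHexagonal.card_filter_mem_convexHull_range {φ : Fin 6 → ℝ} (hφ : IsHexagonal φ)
    {y : Fin 6 → ℝ²} {r : ℝ²} (hy : ∀ j, y j ∈ sector φ r j) :
    48 ≤ #{f : Fin 3 ↪ Fin 6 | r ∈ convexHull ℝ (Set.range (y ∘ f))} := by
  have h := card_filter_map_univ 3 fun s : Finset (Fin 6) => r ∈ convexHull ℝ (y '' s)
  simp only [Finset.coe_map, Finset.coe_univ, Set.image_univ, ← Set.range_comp] at h
  rw [h]
  exact Nat.mul_le_mul_left 6 (eight_le_card_filter_mem_convexHull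
    (fun j => hφ.signedArea_pos (hy j) (.inl (hy (j + 1))))
    fun j => hφ.signedArea_pos (hy j) (.inr (hy (j + 2))))

theorem exists_two_ninths_le_measure_mem_convexHull_of_isOpenPosMeasure {μ : Measure ℝ²}
    [IsProbabilityMeasure μ] [μ.IsOpenPosMeasure] (hline : ∀ θ c, ∀ᵐ x ∂μ, leftForm θ x ≠ c) :
    ∃ r, 2 / 9 ≤ Measure.pi (fun _ : Fin 3 => μ) {y | r ∈ convexHull ℝ (Set.range y)} := by
  obtain ⟨φ, r, hφ, hsector⟩ := exists_sectors_measureReal_eq hline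
  have hμ (j) : μ (sector φ r j) = ENNReal.ofReal (1 / 6) := by
    rw [← hsector j, ofReal_measureReal]
  refine ⟨r, ?_⟩
  calc 2 / 9 = (48 : ℕ) * ENNReal.ofReal (1 / 6) ^ Fintype.card (Fin 3) := by
        rw [← ENNReal.ofReal_pow (by norm_num), ← ENNReal.ofReal_natCast,
          ← ENNReal.ofReal_mul (by norm_num), ← ENNReal.ofReal_ofNat 2, ← ENNReal.ofReal_ofNat 9,
          ← ENNReal.ofReal_div_of_pos (by norm_num)]
        norm_num
    _ ≤ _ := mul_pow_le_measure_pi_of_le_card_filter (fun j => measurableSet_sector φ r j)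
      (hφ.pairwise_disjoint_sector r) (by norm_num) hμ
      (isClosed_setOf_mem_convexHull_range_left r).measurableSet
      fun y hy => hφ.card_filter_mem_convexHull_range hy

section Limit

variable {Ω : Type*} [MeasurableSpace Ω] {P : Measure Ω} [IsFiniteMeasure P] {c : ℝ≥0∞}

theorem le_measure_setOf_frequently_mem {s : ℕ → Set Ω} (hs : ∀ m, MeasurableSet (s m))
    (h : ∀ m, c ≤ P (s m)) : c ≤ P {ω | ∃ᶠ m in atTop, ω ∈ s m} := by
  have hanti : Antitone fun n => ⋃ m ≥ n, s m := fun n n' hn =>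
    Set.biUnion_subset_biUnion_left fun m hm => le_trans hn hm
  have heq : {ω | ∃ᶠ m in atTop, ω ∈ s m} = ⋂ n, ⋃ m ≥ n, s m := by
    ext ω
    simp [frequently_atTop]
  rw [heq, hanti.measure_iInter (fun n => (MeasurableSet.biUnion (Set.to_countable _) fun m _ =>
    hs m).nullMeasurableSet) ⟨0, measure_ne_top P _⟩]
  exact le_iInf fun n =>
    (h n).trans (measure_mono (Set.subset_biUnion_of_mem (u := s) (Set.mem_Ici.2 le_rfl)))

variable {κ E : Type*} [Finite κ] [NormedAddCommGroup E] [NormedSpace ℝ E]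
  {Y : Ω → κ → E} {Z : ℕ → Ω → κ → E} {r : ℕ → E}

theorem le_measure_mem_convexHull_of_tendsto {q : E}
    (hZ : ∀ ω, Tendsto (Z · ω) atTop (𝓝 (Y ω))) (hr : Tendsto r atTop (𝓝 q))
    (hmeas : ∀ m, MeasurableSet {ω | r m ∈ convexHull ℝ (Set.range (Z m ω))})
    (h : ∀ m, c ≤ P {ω | r m ∈ convexHull ℝ (Set.range (Z m ω))}) :
    c ≤ P {ω | q ∈ convexHull ℝ (Set.range (Y ω))} := by
  refine (le_measure_setOf_frequently_mem hmeas h).trans (measure_mono fun ω hω => ?_)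
  have hω : ∃ᶠ m in atTop, (Z m ω, r m) ∈ {p : (κ → E) × E | p.2 ∈ convexHull ℝ (Set.range p.1)} :=
    hω
  exact isClosed_setOf_mem_convexHull_range.mem_of_frequently_of_tendsto hω ((hZ ω).prodMk_nhds hr)

theorem exists_le_measure_mem_convexHull_of_tendsto [ProperSpace E] (hc : c ≠ 0)
    (hZ : ∀ ω, Tendsto (Z · ω) atTop (𝓝 (Y ω)))
    (hmeas : ∀ m, MeasurableSet {ω | r m ∈ convexHull ℝ (Set.range (Z m ω))})
    (h : ∀ m, c ≤ P {ω | r m ∈ convexHull ℝ (Set.range (Z m ω))}) :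
    ∃ q, c ≤ P {ω | q ∈ convexHull ℝ (Set.range (Y ω))} := by
  cases nonempty_fintype κ
  obtain ⟨ω, hω⟩ : {ω | ∃ᶠ m in atTop, r m ∈ convexHull ℝ (Set.range (Z m ω))}.Nonempty :=
    nonempty_of_measure_ne_zero (μ := P) fun h₀ =>
      hc (le_zero_iff.1 (h₀ ▸ le_measure_setOf_frequently_mem hmeas h))
  have hball : Bornology.IsBounded (convexHull ℝ (⋃ m, Set.range (Z m ω))) := by
    rw [isBounded_convexHull]
    obtain ⟨C, hC⟩ := isBounded_iff_forall_norm_le.1 (Metric.isBounded_range_of_tendsto _ (hZ ω))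
    refine isBounded_iff_forall_norm_le.2 ⟨C, fun x hx => ?_⟩
    obtain ⟨m, i, rfl⟩ := Set.mem_iUnion.1 hx
    exact (norm_le_pi_norm (Z m ω) i).trans (hC _ (Set.mem_range_self m))
  obtain ⟨q, -, ψ, hψ, hq⟩ := tendsto_subseq_of_frequently_bounded hball
    (hω.mono fun m hm => convexHull_mono (Set.subset_iUnion _ m) hm)
  exact ⟨q, le_measure_mem_convexHull_of_tendsto (fun ω => (hZ ω).comp hψ.tendsto_atTop) hq
    (fun m => hmeas (ψ m)) fun m => h (ψ m)⟩

end Limit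

section Smoothing

theorem isOpenPosMeasure_map_prod {X Y Z : Type*} [MeasurableSpace X] [MeasurableSpace Y]
    [MeasurableSpace Z] [TopologicalSpace Y] [TopologicalSpace Z] [OpensMeasurableSpace Z]
    {μ : Measure X} [NeZero μ] {ν : Measure Y} [SFinite ν] [ν.IsOpenPosMeasure] {g : X × Y → Z}
    (hg : Measurable g) (hcont : ∀ x, Continuous fun y => g (x, y))
    (hsurj : ∀ x, Function.Surjective fun y => g (x, y)) :
    ((μ.prod ν).map g).IsOpenPosMeasure := by
  refine ⟨fun U hU ⟨z, hz⟩ h => ?_⟩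
  rw [Measure.map_apply hg hU.measurableSet, Measure.measure_prod_null (hg hU.measurableSet)] at h
  obtain ⟨x, hx⟩ := h.exists
  obtain ⟨y, rfl⟩ := hsurj x z
  exact (hU.preimage (hcont x)).measure_ne_zero ν ⟨y, hz⟩ hx

variable {μ ν : Measure ℝ²} {ε : ℝ}

theorem ae_leftForm_ne_map_add_smul [SFinite μ] [SFinite ν]
    (hν : ∀ θ c, ∀ᵐ x ∂ν, leftForm θ x ≠ c) (hε : ε ≠ 0) (θ c : ℝ) :
    ∀ᵐ x ∂(μ.prod ν).map (fun p => p.1 + ε • p.2), leftForm θ x ≠ c := by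
  have hmeas : MeasurableSet {x | leftForm θ x ≠ c} :=
    (isClosed_eq (leftForm θ).continuous continuous_const).measurableSet.compl
  rw [ae_map_iff (by fun_prop) hmeas,
    Measure.ae_prod_iff_ae_ae (p := fun p : ℝ² × ℝ² => leftForm θ (p.1 + ε • p.2) ≠ c)
      (hmeas.preimage (by fun_prop))]
  refine Eventually.of_forall fun x => (hν θ ((c - leftForm θ x) / ε)).mono fun y hy h => hy ?_
  rw [eq_div_iff hε, ← h, map_add, map_smul, smul_eq_mul, add_sub_cancel_left, mul_comm]

variable [IsProbabilityMeasure μ] [IsProbabilityMeasure ν]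

theorem exists_two_ninths_le_measure_mem_convexHull_add_smul [ν.IsOpenPosMeasure]
    (hν : ∀ θ c, ∀ᵐ x ∂ν, leftForm θ x ≠ c) (hε : ε ≠ 0) :
    ∃ r, 2 / 9 ≤ Measure.pi (fun _ : Fin 3 => μ.prod ν)
      {ω | r ∈ convexHull ℝ (Set.range fun i => (ω i).1 + ε • (ω i).2)} := by
  have hg : Measurable fun p : ℝ² × ℝ² => p.1 + ε • p.2 := by fun_prop
  have := Measure.isProbabilityMeasure_map (μ := μ.prod ν) hg.aemeasurable
  have hopen : ((μ.prod ν).map fun p => p.1 + ε • p.2).IsOpenPosMeasure :=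
    isOpenPosMeasure_map_prod hg (fun x => by fun_prop) fun x z =>
      ⟨ε⁻¹ • (z - x), by simp [smul_smul, hε]⟩
  obtain ⟨r, hr⟩ := exists_two_ninths_le_measure_mem_convexHull_of_isOpenPosMeasure
    (ae_leftForm_ne_map_add_smul (μ := μ) hν hε)
  refine ⟨r, hr.trans_eq ?_⟩
  rw [← Measure.pi_map_pi fun _ => hg.aemeasurable, Measure.map_apply (by fun_prop)
    (isClosed_setOf_mem_convexHull_range_left r).measurableSet]
  rfl

variable (μ) in
theorem exists_two_ninths_le_measure_mem_convexHull :
    ∃ r, 2 / 9 ≤ Measure.pi (fun _ : Fin 3 => μ) {y | r ∈ convexHull ℝ (Set.range y)} := by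
  set γ : Measure ℝ² := (volume : Measure ℝ²).toFinite
  have : γ.IsOpenPosMeasure := (absolutelyContinuous_toFinite _).isOpenPosMeasure
  have hγ (θ c : ℝ) : ∀ᵐ x ∂γ, leftForm θ x ≠ c := (toFinite_absolutelyContinuous _).ae_le
    (measure_eq_zero_iff_ae_notMem.1 (volume_leftForm_eq θ c))
  have hε (m : ℕ) : (1 : ℝ) / (m + 1) ≠ 0 := by positivity
  choose r hr using fun m => exists_two_ninths_le_measure_mem_convexHull_add_smul (μ := μ) hγ (hε m)
  have htendsto (ω : Fin 3 → ℝ² × ℝ²) :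
      Tendsto (fun m i => (ω i).1 + ((1 : ℝ) / ((m : ℕ) + 1)) • (ω i).2) atTop
        (𝓝 fun i => (ω i).1) := by
    refine tendsto_pi_nhds.2 fun i => ?_
    have hzero := (tendsto_one_div_add_atTop_nhds_zero_nat (𝕜 := ℝ)).smul_const (ω i).2
    simpa using hzero.const_add (ω i).1
  obtain ⟨q, hq⟩ := exists_le_measure_mem_convexHull_of_tendsto (by simp) htendsto
    (fun m => (isClosed_setOf_mem_convexHull_range_left (r m)).measurableSet.preimage
      (f := fun (ω : Fin 3 → ℝ² × ℝ²) i => (ω i).1 + ((1 : ℝ) / (m + 1)) • (ω i).2)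
      (by fun_prop)) hr
  have hlaw : (Measure.pi fun _ : Fin 3 => μ.prod γ).map (fun ω i => (ω i).1) =
      Measure.pi fun _ : Fin 3 => μ := by
    simp [Measure.pi_map_pi fun _ => measurable_fst.aemeasurable]
  refine ⟨q, hq.trans_eq ?_⟩
  rw [← hlaw, Measure.map_apply (by fun_prop)
    (isClosed_setOf_mem_convexHull_range_left q).measurableSet]
  rfl

end Smoothing

section Counting

variable {ι κ : Type*} [Fintype ι] [Fintype κ] [DecidableEq κ]

open Classical in
theorem measure_pi_map_uniformOn_univ {X : Type*} [MeasurableSpace X] [MeasurableSpace ι]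
    [MeasurableSingletonClass ι] (x : ι → X) {T : Set (κ → X)} (hT : MeasurableSet T) :
    Measure.pi (fun _ : κ => (uniformOn Set.univ).map x) T =
      #{f : κ → ι | x ∘ f ∈ T} / Fintype.card ι ^ Fintype.card κ := by
  have hx : Measurable x := measurable_of_finite x
  rw [← Measure.pi_map_pi fun _ => hx.aemeasurable, ← uniformOn_pi, Set.pi_univ,
    Measure.map_apply (by fun_prop) hT, uniformOn_univ,
    Measure.count_apply_finite _ (Set.toFinite _)]
  simp [Function.comp_def]

open Classical in
theorem card_filter_add_card_embedding_le (Q : (κ → ι) → Prop) :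
    #{f : κ → ι | Q f} + Fintype.card (κ ↪ ι) ≤ #{f : κ ↪ ι | Q f} + Fintype.card (κ → ι) := by
  have hle : #{f : κ ↪ ι | ¬ Q f} ≤ #{f : κ → ι | ¬ Q f} :=
    Finset.card_le_card_of_injOn (fun f => f) (by simp [Set.MapsTo]) DFunLike.coe_injective.injOn
  have hemb := Finset.card_filter_add_card_filter_not (s := .univ) fun f : κ ↪ ι => Q f
  have hfun := Finset.card_filter_add_card_filter_not (s := .univ) fun f : κ → ι => Q f
  simp only [Finset.card_univ] at hemb hfun
  lia

open Classical in
theorem exists_two_ninths_mul_pow_le_card (x : ι → ℝ²) :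
    ∃ r, (2 / 9 : ℝ) * Fintype.card ι ^ 3 ≤
      #{f : Fin 3 → ι | r ∈ convexHull ℝ (Set.range (x ∘ f))} := by
  rcases isEmpty_or_nonempty ι with hι | hι
  · exact ⟨0, by simp⟩
  let _ : MeasurableSpace ι := ⊤
  have : IsProbabilityMeasure ((uniformOn (Set.univ : Set ι)).map x) :=
    Measure.isProbabilityMeasure_map measurable_from_top.aemeasurable
  obtain ⟨r, hr⟩ := exists_two_ninths_le_measure_mem_convexHull ((uniformOn Set.univ).map x)
  refine ⟨r, ?_⟩
  rw [measure_pi_map_uniformOn_univ x (isClosed_setOf_mem_convexHull_range_left r).measurableSet,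
    ENNReal.le_div_iff_mul_le (by simp) (by simp)] at hr
  have := ENNReal.toReal_mono (by finiteness) hr
  simpa using this

end Counting

theorem cast_choose_three (n : ℕ) : 6 * (n.choose 3 : ℝ) = n * (n - 1) * (n - 2) := by
  rcases n with _ | _ | k
  · simp
  · simp [Nat.choose]
  · have h : k * ((k + 1) * (k + 2)) = 6 * (k + 2).choose 3 := by
      simpa [Nat.descFactorial, Nat.factorial] using
        Nat.descFactorial_eq_factorial_mul_choose (k + 2) 3
    have h' : (k * ((k + 1) * (k + 2)) : ℝ) = 6 * (k + 2).choose 3 := by exact_mod_cast h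
    push_cast
    linear_combination -h'

theorem two_ninths_sub_mul_choose_three_le {n : ℕ} {N : ℝ} (hN : 0 ≤ N)
    (h : 2 / 9 * (n : ℝ) ^ 3 + 6 * n.choose 3 ≤ 6 * N + n ^ 3) :
    (2 / 9 - 3 / n : ℝ) * n.choose 3 ≤ N := by
  rcases n.eq_zero_or_pos with rfl | hpos
  · simpa
  have hn : (0 : ℝ) < n := by exact_mod_cast hpos
  rcases le_or_gt n 13 with hsmall | hlarge
  · refine (mul_nonpos_of_nonpos_of_nonneg ?_ (Nat.cast_nonneg _)).trans hN
    have : (n : ℝ) ≤ 13 := by exact_mod_cast hsmall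
    rw [sub_nonpos, le_div_iff₀ hn]
    linarith
  · have : (14 : ℝ) ≤ n := by exact_mod_cast hlarge
    have hchoose := cast_choose_three n
    have hquot : 3 / (n : ℝ) * (6 * n.choose 3) = 3 * (n - 1) * (n - 2) := by
      rw [hchoose]
      field_simp
    nlinarith

open Classical in
theorem stmt_10_general {ι : Type*} [Fintype ι] (x : ι → ℝ²) :
    ∃ r, (2 / 9 - 3 / Fintype.card ι : ℝ) * (Fintype.card ι).choose 3 ≤
      #{t ∈ Finset.univ.powersetCard 3 | r ∈ convexHull ℝ (x '' (t : Finset ι))} := by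
  obtain ⟨r, hr⟩ := exists_two_ninths_mul_pow_le_card x
  refine ⟨r, two_ninths_sub_mul_choose_three_le (Nat.cast_nonneg _) ?_⟩
  have hemb := card_filter_map_univ 3 fun t : Finset ι => r ∈ convexHull ℝ (x '' t)
  simp only [Finset.coe_map, Finset.coe_univ, Set.image_univ, ← Set.range_comp] at hemb
  have hle := card_filter_add_card_embedding_le fun f : Fin 3 → ι =>
    r ∈ convexHull ℝ (Set.range (x ∘ f))
  rw [hemb, Fintype.card_embedding_eq, Fintype.card_fun, Fintype.card_fin,
    Nat.descFactorial_eq_factorial_mul_choose] at hle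
  have hle' : (_ : ℝ) ≤ _ := Nat.cast_le.2 hle
  push_cast [Nat.factorial] at hle'
  linarith

open Classical in
/-- Affine instance of Gromov's overlap theorem: some point of the plane is
covered by at least a `2/9 - 3/n` fraction of the `n.choose 3` triangles
spanned by `n` points in general position. -/
theorem stmt_10 (n : ℕ) (x : Fin n → EuclideanSpace ℝ (Fin 2))
    (hx : InGeneralPosition x) :
    ∃ r : EuclideanSpace ℝ (Fin 2),
      (2 / 9 - 3 / n : ℝ) * (n.choose 3) ≤
        (((Finset.univ : Finset (Fin n)).powersetCard 3).filter
          (fun t => r ∈ convexHull ℝ (x '' ↑t))).card := by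
  -- In the statement the triples are coerced to sets before being counted.
  simpa [Finset.filter_image,
    @Finset.card_image_of_injective _ _ _ (_) _ Finset.coe_injective] using stmt_10_general x
end
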